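/- For all positive integers α, m, n, r, the congruence ∑_{k=0}^{n-1} [k(k+2)]^r · [2(k+1)] · q^{(n-2-k)(2αm+1)} · (w_k^{(α)}(x;q)·w_{k+1}^{(α)}(x;q))^m ≡ 0 (mod [n]) holds in ℤ[q][x]. -/

import Mathlib

open Polynomial LaurentPolynomial

/-- The Gaussian binomial coefficient as a polynomial in `q` over `ℤ`. -/
noncomputable def qbinom : ℕ → ℕ → Polynomial ℤ
  | _, 0 => 1
  | 0, _ + 1 => 0
  | n + 1, k + 1 => qbinom n k + Polynomial.X ^ (k + 1) * qbinom n (k + 1)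

/-- The `q`-integer `[m] = 1 + q + ⋯ + q^{m-1}` in `ℤ[q]`. -/
noncomputable def qint (m : ℕ) : Polynomial ℤ := ∑ i ∈ Finset.range m, Polynomial.X ^ i

/-- The `q`-integer `[m]` as a Laurent polynomial in `q`. -/
noncomputable def qintL (m : ℕ) : LaurentPolynomial ℤ := (qint m).toLaurent

/-- `qbinom(k-1,j-1)·qbinom(k+j,j) − qbinom(k,j)·qbinom(k+j,j-1)`. -/
noncomputable def qwCoeff (k j : ℕ) : Polynomial ℤ :=
  qbinom (k - 1) (j - 1) * qbinom (k + j) j - qbinom k j * qbinom (k + j) (j - 1)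

/-- `w_k^{(α)}(x;q) = ∑_{j=1}^{k} q^{α(C(j+1,2)−(k+1)(j−1))} ·
(qbinom(k-1,j-1)·qbinom(k+j,j) − qbinom(k,j)·qbinom(k+j,j-1))^α · x^{j-1}`,
a polynomial in `x` with coefficients in `ℤ[q,q⁻¹]` (the exponent of `q` may be negative). -/
noncomputable def qw (α k : ℕ) : Polynomial (LaurentPolynomial ℤ) :=
  ∑ j ∈ Finset.Icc 1 k,
    Polynomial.C (LaurentPolynomial.T ((α : ℤ) * (((j + 1).choose 2 : ℤ) - ((k : ℤ) + 1) * ((j : ℤ) - 1))) *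
        ((qwCoeff k j).toLaurent) ^ α) *
      Polynomial.X ^ (j - 1)

/-!
The `q`-integer `[n]` is the product of the pairwise coprime cyclotomic polynomials `Φ_d` with
`1 < d ∣ n`, so it suffices that the sum vanishes when `q` is a root of unity of order `d`. There
the terms cancel within each block `a d ≤ k < (a + 1) d`: those with `k ≡ -2, -1, 0` modulo `d`
vanish because of the `q`-integers in front, and for `b + b' + 2 = d` the terms `a d + b` and
`a d + b'` are opposite. The latter holds because `w_{a d + b}` and `w_{a d + b'}` agree up to a
power of `q` when `b + b' + 1 = d`. Indeed the `q`-Lucas theorem reduces this to `a = 0`, where it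
follows from the product formula
`[j] ([k-1, j-1] [k+j, j] - [k, j] [k+j, j-1]) = q^k [k-1, j-1] [k+j, j-1]`
and the `q`-analogue of upper negation for binomial coefficients.
-/

section Summation

variable {M : Type*}

lemma sum_range_mul [AddCommMonoid M] (f : ℕ → M) (m n : ℕ) :
    ∑ i ∈ Finset.range (m * n), f i =
      ∑ i ∈ Finset.range m, ∑ j ∈ Finset.range n, f (i * n + j) := by
  induction m with
  | zero => simp
  | succ m ih => rw [Nat.succ_mul, Finset.sum_range_add, ih, Finset.sum_range_succ]

lemma sum_range_eq_zero_of_reflect [AddCommGroup M] [IsAddTorsionFree M] {f : ℕ → M} {n : ℕ}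
    (h : ∀ i j, i + j + 1 = n → f j = -f i) : ∑ i ∈ Finset.range n, f i = 0 := by
  rw [← self_eq_neg, ← Finset.sum_neg_distrib]
  nth_rw 1 [← Finset.sum_range_reflect]
  refine Finset.sum_congr rfl fun i hi => h i _ ?_
  rw [Finset.mem_range] at hi
  omega

end Summation

lemma qint_add (a b : ℕ) : qint (a + b) = qint a + X ^ a * qint b := by
  simp only [qint, Finset.sum_range_add, Finset.mul_sum, pow_add]

lemma isRelPrime_cyclotomic {m n : ℕ} (hm : 0 < m) (hn : 0 < n) (hmn : m ≠ n) :
    IsRelPrime (cyclotomic m ℤ) (cyclotomic n ℤ) := by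
  rw [(cyclotomic.irreducible hm).isRelPrime_iff_not_dvd]
  intro hdvd
  have hassoc := (cyclotomic.irreducible hm).associated_of_dvd (cyclotomic.irreducible hn) hdvd
  exact hmn (cyclotomic_injective
    (eq_of_monic_of_associated (cyclotomic.monic m ℤ) (cyclotomic.monic n ℤ) hassoc))

lemma cyclotomic_dvd_of_aeval_eq_zero {K : Type*} [Field K] [CharZero K] {d : ℕ} (hd : 0 < d)
    {ζ : K} (h : IsPrimitiveRoot ζ d) {p : ℤ[X]} (hp : aeval ζ p = 0) : cyclotomic d ℤ ∣ p := by
  rw [cyclotomic_eq_minpoly h hd]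
  exact minpoly.isIntegrallyClosed_dvd (h.isIntegral hd) hp

lemma qint_dvd_of_forall_cyclotomic_dvd {n : ℕ} (hn : 0 < n) {p : ℤ[X]}
    (h : ∀ d, 1 < d → d ∣ n → cyclotomic d ℤ ∣ p) : qint n ∣ p := by
  rw [qint, ← prod_cyclotomic_eq_geom_sum hn]
  refine Finset.prod_dvd_of_isRelPrime (fun a ha b hb hab => ?_) fun d hd => ?_
  · rw [Finset.mem_coe, Finset.mem_erase, Nat.mem_divisors] at ha hb
    exact isRelPrime_cyclotomic (Nat.pos_of_dvd_of_pos ha.2.1 hn)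
      (Nat.pos_of_dvd_of_pos hb.2.1 hn) hab
  · rw [Finset.mem_erase, Nat.mem_divisors] at hd
    exact h d (Nat.one_lt_iff_ne_zero_and_ne_one.mpr
      ⟨ne_zero_of_dvd_ne_zero hn.ne' hd.2.1, hd.1⟩) hd.2.1

lemma qbinom_zero_right (n : ℕ) : qbinom n 0 = 1 := by
  cases n <;> rfl

lemma qbinom_zero_succ (k : ℕ) : qbinom 0 (k + 1) = 0 := rfl

lemma qbinom_succ_succ (n k : ℕ) :
    qbinom (n + 1) (k + 1) = qbinom n k + X ^ (k + 1) * qbinom n (k + 1) := rfl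

lemma qbinom_eq_zero_of_lt {n k : ℕ} (h : n < k) : qbinom n k = 0 := by
  induction n generalizing k with
  | zero => obtain ⟨k, rfl⟩ := Nat.exists_eq_add_one.mpr h; exact qbinom_zero_succ k
  | succ n ih =>
    obtain ⟨k, rfl⟩ := Nat.exists_eq_add_one.mpr (Nat.zero_lt_of_lt h)
    rw [qbinom_succ_succ, ih (by omega), ih (by omega), mul_zero, add_zero]

lemma qbinom_self (n : ℕ) : qbinom n n = 1 := by
  induction n with
  | zero => rfl
  | succ n ih => rw [qbinom_succ_succ, ih, qbinom_eq_zero_of_lt n.lt_succ_self, mul_zero, add_zero]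

/-- Multiplying `(1 - q ^ (k + 1)) [n, k + 1] = (1 - q ^ (n - k)) [n, k]` by `q ^ k` avoids the
truncated subtraction. -/
lemma X_pow_mul_one_sub_mul_qbinom_succ (n k : ℕ) :
    X ^ k * (1 - X ^ (k + 1)) * qbinom n (k + 1) = (X ^ k - X ^ n) * qbinom n k := by
  induction n generalizing k with
  | zero => cases k <;> simp [qbinom_zero_succ]
  | succ n ih =>
    cases k with
    | zero =>
      have h := ih 0
      simp only [qbinom_succ_succ, qbinom_zero_right] at h ⊢
      linear_combination X * h
    | succ k =>
      rw [qbinom_succ_succ, qbinom_succ_succ]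
      linear_combination X ^ (k + 2) * ih (k + 1) + X * ih k

lemma one_sub_mul_qbinom_succ_succ (n k : ℕ) :
    (1 - X ^ (k + 1)) * qbinom (n + 1) (k + 1) = (1 - X ^ (n + 1)) * qbinom n k := by
  rw [qbinom_succ_succ]
  linear_combination X * X_pow_mul_one_sub_mul_qbinom_succ n k

lemma one_sub_mul_qbinom_succ (n k : ℕ) :
    (1 - X ^ (k + 1)) * qbinom (n + k) (k + 1) = (1 - X ^ n) * qbinom (n + k) k := by
  apply mul_left_cancel₀ (pow_ne_zero k X_ne_zero)
  linear_combination X_pow_mul_one_sub_mul_qbinom_succ (n + k) k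

lemma qwCoeff_zero_right (k : ℕ) : qwCoeff k 0 = 0 := by
  simp [qwCoeff, qbinom_zero_right]

lemma qwCoeff_eq_zero_of_lt {k j : ℕ} (hk : 0 < k) (h : k < j) : qwCoeff k j = 0 := by
  rw [qwCoeff, qbinom_eq_zero_of_lt h, qbinom_eq_zero_of_lt (by omega : k - 1 < j - 1)]
  ring

lemma one_sub_mul_qwCoeff (k j : ℕ) :
    (1 - X ^ (j + 1)) * qwCoeff (k + 1) (j + 1) =
      X ^ (k + 1) * (1 - X) * (qbinom k j * qbinom (k + 2 + j) j) := by
  rw [qwCoeff, show k + 1 + (j + 1) = k + 2 + j by ring, Nat.add_sub_cancel, Nat.add_sub_cancel]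
  linear_combination qbinom k j * one_sub_mul_qbinom_succ (k + 2) j -
    qbinom (k + 2 + j) j * one_sub_mul_qbinom_succ_succ k j

section RootOfUnity

variable {R : Type*} [CommRing R] {q : R} {d : ℕ}

lemma one_sub_pow_ne_zero (h : IsPrimitiveRoot q d) {i : ℕ} (hi : i ≠ 0)
    (hid : i < d) : 1 - q ^ i ≠ 0 :=
  sub_ne_zero.mpr (h.pow_ne_one_of_pos_of_lt hi hid).symm

variable [IsDomain R]

/-- The `q`-analogue of `(m + e).choose e = (-1) ^ e * (-1 - m).choose e`: modulo the order of `q`,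
`n` is `-1 - m`. -/
lemma aeval_qbinom_add_eq_neg_one_pow_mul (h : IsPrimitiveRoot q d) {n m e : ℕ} (hd : n + m + 1 = d)
    (he : e < d) :
    aeval q (qbinom (m + e) e) =
      (-1) ^ e * q ^ ((m + 1) * e + e.choose 2) * aeval q (qbinom n e) := by
  induction e with
  | zero => simp [qbinom_zero_right]
  | succ e ih =>
    have hn := congrArg (aeval q) (X_pow_mul_one_sub_mul_qbinom_succ n e)
    have hm := congrArg (aeval q) (one_sub_mul_qbinom_succ_succ (m + e) e)
    have hone : q ^ n * q ^ (m + 1) = 1 := by rw [← pow_add, ← add_assoc, hd, h.pow_eq_one]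
    simp only [map_mul, map_sub, map_pow, map_one, aeval_X] at hn hm
    apply mul_left_cancel₀ (one_sub_pow_ne_zero h e.add_one_ne_zero he)
    rw [Nat.choose_succ_succ' e 1, Nat.choose_one_right, ← add_assoc m]
    linear_combination hm + (1 - q ^ (m + e + 1)) * ih (by omega) +
      (-1) ^ e * q ^ ((m + 1) * e + e.choose 2) *
        (q ^ (m + 1) * hn - aeval q (qbinom n e) * hone)

lemma aeval_qbinom_mul_qbinom_reflect (h : IsPrimitiveRoot q d) {k l e : ℕ} (hd : k + l + 3 = d)
    (he : e < d) :
    q ^ ((2 * k + 3) * e) * aeval q (qbinom l e * qbinom (l + 2 + e) e) =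
      aeval q (qbinom k e * qbinom (k + 2 + e) e) := by
  have hk := aeval_qbinom_add_eq_neg_one_pow_mul h (show k + (l + 2) + 1 = d by omega) he
  have hl := aeval_qbinom_add_eq_neg_one_pow_mul h (show l + (k + 2) + 1 = d by omega) he
  have hone : q ^ (k * e) * q ^ (l * e) * q ^ (3 * e) = 1 := by
    rw [← pow_add, ← pow_add, ← add_mul, ← add_mul, hd, pow_mul, h.pow_eq_one, one_pow]
  rw [map_mul, map_mul, hk, hl]
  linear_combination (-1) ^ e * q ^ ((k + 3) * e + e.choose 2) * aeval q (qbinom k e) *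
    aeval q (qbinom l e) * hone

lemma aeval_qwCoeff_reflect_of_lt (h : IsPrimitiveRoot q d) {k l j : ℕ} (hk : 0 < k) (hl : 0 < l)
    (hd : k + l + 1 = d) (hj : j < d) :
    q ^ ((2 * k + 1) * j) * aeval q (qwCoeff l j) = aeval q (qwCoeff k j) := by
  obtain rfl | hj0 := j.eq_zero_or_pos
  · simp [qwCoeff_zero_right]
  obtain ⟨k, rfl⟩ := Nat.exists_eq_add_one.mpr hk
  obtain ⟨l, rfl⟩ := Nat.exists_eq_add_one.mpr hl
  obtain ⟨j, rfl⟩ := Nat.exists_eq_add_one.mpr hj0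
  have hck := congrArg (aeval q) (one_sub_mul_qwCoeff k j)
  have hcl := congrArg (aeval q) (one_sub_mul_qwCoeff l j)
  have hone : q ^ k * q ^ l * q ^ 3 = 1 := by
    rw [← pow_add, ← pow_add, ← h.pow_eq_one, ← hd]; ring
  have hprod := aeval_qbinom_mul_qbinom_reflect h (show k + l + 3 = d by omega)
    (show j < d by omega)
  apply mul_left_cancel₀ (one_sub_pow_ne_zero h j.add_one_ne_zero hj)
  simp only [map_mul, map_sub, map_pow, map_one, aeval_X] at hck hcl hprod
  linear_combination q ^ ((2 * (k + 1) + 1) * (j + 1)) * hcl - hck + q ^ (k + 1) * (1 - q) * hprod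
    + q ^ (k + 1) * (1 - q) * q ^ ((2 * k + 3) * j) * aeval q (qbinom l j) *
      aeval q (qbinom (l + 2 + j) j) * hone

lemma aeval_qbinom_order_eq_zero (h : IsPrimitiveRoot q d) {k : ℕ} (hk : 0 < k) (hkd : k < d) :
    aeval q (qbinom d k) = 0 := by
  obtain ⟨k, rfl⟩ := Nat.exists_eq_add_one.mpr hk
  obtain ⟨d, rfl⟩ := Nat.exists_eq_add_one.mpr (Nat.zero_lt_of_lt hkd)
  apply (mul_eq_zero_iff_left (one_sub_pow_ne_zero h k.add_one_ne_zero hkd)).mp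
  simpa [h.pow_eq_one] using congrArg (aeval q) (one_sub_mul_qbinom_succ_succ d k)

lemma aeval_qbinom_add_order_of_lt (h : IsPrimitiveRoot q d) (n : ℕ) {k : ℕ} (hk : k < d) :
    aeval q (qbinom (n + d) k) = aeval q (qbinom n k) := by
  induction n generalizing k with
  | zero =>
    obtain rfl | hk0 := k.eq_zero_or_pos
    · simp [qbinom_zero_right]
    · rw [zero_add, aeval_qbinom_order_eq_zero h hk0 hk, qbinom_eq_zero_of_lt hk0, map_zero]
  | succ n ih =>
    cases k with
    | zero => simp [qbinom_zero_right]
    | succ k =>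
      rw [Nat.add_right_comm, qbinom_succ_succ, qbinom_succ_succ]
      simp only [map_add, map_mul, ih hk, ih (Nat.lt_of_succ_lt hk)]

lemma aeval_qbinom_add_order_add_order (h : IsPrimitiveRoot q d) (hd : 0 < d) (n k : ℕ) :
    aeval q (qbinom (n + d) (k + d)) = aeval q (qbinom n (k + d)) + aeval q (qbinom n k) := by
  induction n generalizing k with
  | zero =>
    rw [zero_add, qbinom_eq_zero_of_lt (show 0 < k + d by omega), map_zero, zero_add]
    obtain rfl | hk := k.eq_zero_or_pos
    · rw [zero_add, qbinom_self, qbinom_zero_right]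
    · rw [qbinom_eq_zero_of_lt hk, qbinom_eq_zero_of_lt (Nat.lt_add_of_pos_left hk)]
  | succ n ih =>
    cases k with
    | zero =>
      obtain ⟨d, rfl⟩ := Nat.exists_eq_add_one.mpr hd
      have ih := ih 0
      have hlt := aeval_qbinom_add_order_of_lt h n d.lt_succ_self
      rw [zero_add] at ih ⊢
      rw [Nat.add_right_comm, qbinom_succ_succ, qbinom_succ_succ]
      simp [ih, hlt, h.pow_eq_one, qbinom_zero_right, add_assoc]
    | succ k =>
      rw [Nat.add_right_comm n, Nat.add_right_comm k, qbinom_succ_succ, qbinom_succ_succ,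
        qbinom_succ_succ, Nat.add_right_comm k]
      simp only [map_add, map_mul, map_pow, aeval_X, ih, pow_add, h.pow_eq_one]
      ring

/-- The `q`-Lucas theorem. The range `b < d + e` rather than `b < d` accommodates the upper argument
`k + j` of `qwCoeff k j`, which may exceed the order `d` even if `k` and `j` do not. -/
lemma aeval_qbinom_lucas (h : IsPrimitiveRoot q d) (a c : ℕ) {b e : ℕ} (he : e < d)
    (hb : b < d + e) :
    aeval q (qbinom (a * d + b) (c * d + e)) = a.choose c * aeval q (qbinom b e) := by
  induction a generalizing c with
  | zero =>
    cases c with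
    | zero => simp
    | succ c => rw [qbinom_eq_zero_of_lt (by linarith [Nat.zero_le (c * d)])]; simp
  | succ a ih =>
    rw [show (a + 1) * d + b = a * d + b + d by ring]
    cases c with
    | zero => simpa [aeval_qbinom_add_order_of_lt h _ he] using ih 0
    | succ c =>
      rw [show (c + 1) * d + e = c * d + e + d by ring,
        aeval_qbinom_add_order_add_order h (by omega), ih,
        show c * d + e + d = (c + 1) * d + e by ring, ih, Nat.choose_succ_succ]
      push_cast
      ring

lemma aeval_qwCoeff_lucas (h : IsPrimitiveRoot q d) (a c : ℕ) {k j : ℕ} (hk : 0 < k)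
    (hkd : k + 1 < d) (hj : j < d) :
    aeval q (qwCoeff (a * d + k) (c * d + j)) =
      a.choose c * (a + c).choose c * aeval q (qwCoeff k j) := by
  obtain ⟨k, rfl⟩ := Nat.exists_eq_add_one.mpr hk
  have hadd (j : ℕ) : a * d + (k + 1) + (c * d + j) = (a + c) * d + (k + 1 + j) := by ring
  have hpred (n i : ℕ) : n * d + (i + 1) - 1 = n * d + i := rfl
  cases j with
  | succ j =>
    simp only [qwCoeff, hadd, hpred, Nat.add_sub_cancel, map_sub, map_mul]
    rw [aeval_qbinom_lucas h a c (by omega) (by omega),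
      aeval_qbinom_lucas h a c (by omega) (by omega),
      aeval_qbinom_lucas h _ c (by omega) (by omega),
      aeval_qbinom_lucas h _ c (by omega) (by omega)]
    ring
  | zero =>
    rw [qwCoeff_zero_right, map_zero, mul_zero]
    cases c with
    | zero => simp [qwCoeff_zero_right]
    | succ c =>
      obtain ⟨d, rfl⟩ := Nat.exists_eq_add_one.mpr (Nat.zero_lt_of_lt hj)
      have hpred' : (c + 1) * (d + 1) + 0 - 1 = c * (d + 1) + d := by
        rw [add_one_mul c]; omega
      rw [qwCoeff, hadd, hpred, hpred', map_sub, map_mul, map_mul,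
        aeval_qbinom_lucas h a c d.lt_succ_self (by omega),
        aeval_qbinom_lucas h (a + (c + 1)) c d.lt_succ_self (by omega),
        qbinom_eq_zero_of_lt (show k < d by omega),
        qbinom_eq_zero_of_lt (show k + 1 + 0 < d by omega)]
      simp

lemma aeval_qwCoeff_reflect (h : IsPrimitiveRoot q d) {k l : ℕ} (hk : 0 < k) (hl : 0 < l)
    (hd : k + l + 1 = d) (a j : ℕ) :
    q ^ ((2 * k + 1) * j) * aeval q (qwCoeff (a * d + l) j) =
      aeval q (qwCoeff (a * d + k) j) := by
  obtain ⟨c, i, hi, rfl⟩ : ∃ c i, i < d ∧ j = c * d + i :=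
    ⟨j / d, j % d, Nat.mod_lt j (by omega), (Nat.div_add_mod' j d).symm⟩
  have hpow : q ^ ((2 * k + 1) * (c * d + i)) = q ^ ((2 * k + 1) * i) := by
    rw [mul_add, ← mul_assoc, pow_add, pow_mul' _ _ d, h.pow_eq_one, one_pow, one_mul]
  rw [hpow, aeval_qwCoeff_lucas h a c hk (by omega) hi,
    aeval_qwCoeff_lucas h a c hl (by omega) hi, ← aeval_qwCoeff_reflect_of_lt h hk hl hd hi]
  ring

lemma aeval_qint_eq_zero (h : IsPrimitiveRoot q d) (hd : 1 < d) {n : ℕ} (hn : d ∣ n) :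
    aeval q (qint n) = 0 := by
  apply (mul_eq_zero_iff_left (sub_ne_zero.mpr (h.ne_one hd))).mp
  simpa [qint, (h.pow_eq_one_iff_dvd n).mpr hn] using mul_geom_sum q n

lemma aeval_qint_mod (h : IsPrimitiveRoot q d) (hd : 1 < d) (n : ℕ) :
    aeval q (qint (n % d)) = aeval q (qint n) := by
  conv_rhs => rw [← Nat.div_add_mod n d, qint_add]
  simp [aeval_qint_eq_zero h hd, pow_mul, h.pow_eq_one]

lemma pow_mul_aeval_qint_eq_neg (h : IsPrimitiveRoot q d) (hd : 1 < d) {a b : ℕ}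
    (hab : d ∣ a + b) : q ^ a * aeval q (qint b) = -aeval q (qint a) := by
  have hsum := aeval_qint_eq_zero h hd hab
  rw [qint_add, map_add, map_mul, map_pow, aeval_X] at hsum
  exact eq_neg_of_add_eq_zero_right hsum

end RootOfUnity

section Evaluation

variable {R : Type*} [CommRing R]

/-- Evaluation at a unit of Laurent polynomials with integer coefficients. -/
noncomputable def laurentEval (z : Rˣ) : LaurentPolynomial ℤ →+* R :=
  LaurentPolynomial.eval₂ (algebraMap ℤ R) z

lemma laurentEval_T (z : Rˣ) (n : ℤ) : laurentEval z (T n) = (z ^ n : Rˣ) :=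
  LaurentPolynomial.eval₂_T _ _ _

lemma laurentEval_toLaurent (z : Rˣ) (p : ℤ[X]) :
    laurentEval z (toLaurent p) = aeval (z : R) p :=
  LaurentPolynomial.eval₂_toLaurent _ _ _

end Evaluation

lemma qintL_dvd_of_forall_laurentEval_eq_zero {n : ℕ} (hn : 0 < n) {f : LaurentPolynomial ℤ}
    (h : ∀ d, 1 < d → d ∣ n → ∀ z : ℂˣ, IsPrimitiveRoot z d → laurentEval z f = 0) :
    qintL n ∣ f := by
  obtain ⟨N, p, hp⟩ := f.exists_T_pow
  have hdvd : qint n ∣ p := by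
    refine qint_dvd_of_forall_cyclotomic_dvd hn fun d hd hdn => ?_
    have hζ := Complex.isPrimitiveRoot_exp d (by omega)
    obtain ⟨z, hz⟩ := hζ.isUnit (by omega)
    refine cyclotomic_dvd_of_aeval_eq_zero (by omega) hζ ?_
    rw [← hz] at hζ ⊢
    rw [← laurentEval_toLaurent, hp, map_mul, h d hd hdn z (IsPrimitiveRoot.coe_units_iff.mp hζ),
      zero_mul]
  rw [← (isUnit_T (N : ℤ)).dvd_mul_right, ← hp]
  exact map_dvd toLaurent hdvd

lemma coeff_qw {α k : ℕ} (hα : α ≠ 0) (hk : 0 < k) (i : ℕ) :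
    (qw α k).coeff i =
      (T (((i + 2).choose 2 : ℤ) - (k + 1) * i) * toLaurent (qwCoeff k (i + 1))) ^ α := by
  have hterm (j : ℕ) (hj : j ∈ Finset.Icc 1 k) : i = j - 1 ↔ i + 1 = j := by
    rw [Finset.mem_Icc] at hj
    omega
  simp only [qw, Polynomial.finsetSum_coeff, Polynomial.coeff_C_mul_X_pow]
  rw [Finset.sum_congr rfl fun j hj => if_congr (hterm j hj) rfl rfl, Finset.sum_ite_eq]
  split_ifs with hi
  · rw [mul_pow, T_pow, Nat.cast_succ, add_sub_cancel_right]
  · rw [Finset.mem_Icc] at hi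
    rw [qwCoeff_eq_zero_of_lt hk (by omega), map_zero, mul_zero, zero_pow hα]

lemma zpow_eq_zpow_of_modEq {G : Type*} [CommGroup G] {z : G} {d : ℕ} (h : IsPrimitiveRoot z d)
    {a b : ℤ} (hab : a ≡ b [ZMOD d]) : z ^ a = z ^ b :=
  zpow_eq_zpow_iff_modEq.mpr (h.eq_orderOf ▸ hab)

/-- The factor of the `k`-th summand that does not involve `x`; the theorem concerns `s = n - 2`. -/
noncomputable def summandWeight (α m r : ℕ) (s : ℤ) (k : ℕ) : LaurentPolynomial ℤ :=
  qintL (k * (k + 2)) ^ r * qintL (2 * (k + 1)) * T ((s - k) * (2 * α * m + 1))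

/-- The `k`-th summand of the theorem, for `s = n - 2`. -/
noncomputable def summand (α m r : ℕ) (s : ℤ) (k : ℕ) : Polynomial (LaurentPolynomial ℤ) :=
  Polynomial.C (summandWeight α m r s k) * (qw α k * qw α (k + 1)) ^ m

section Vanishing

variable {R : Type*} [CommRing R] [IsDomain R] {z : Rˣ} {d : ℕ} {α r : ℕ}

lemma map_qw_reflect (h : IsPrimitiveRoot z d) (hα : α ≠ 0) {k l : ℕ} (hk : 0 < k) (hl : 0 < l)
    (hd : k + l + 1 = d) (a : ℕ) :
    Polynomial.C ((z : R) ^ ((2 * k + 1) * α)) * (qw α (a * d + l)).map (laurentEval z) =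
      (qw α (a * d + k)).map (laurentEval z) := by
  ext i
  have hexp : z ^ (((i + 2).choose 2 : ℤ) - ((a * d + k : ℕ) + 1) * i) * z ^ ((2 * k + 1) * (i + 1))
      = z ^ (((i + 2).choose 2 : ℤ) - ((a * d + l : ℕ) + 1) * i) * z ^ (2 * k + 1) := by
    rw [← zpow_natCast, ← zpow_natCast, ← zpow_add, ← zpow_add]
    refine zpow_eq_zpow_of_modEq h (Int.modEq_iff_dvd.mpr ⟨-i, ?_⟩)
    push_cast [← hd]
    ring
  replace hexp := congrArg Units.val hexp
  simp only [Units.val_mul, Units.val_pow_eq_pow_val] at hexp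
  rw [Polynomial.coeff_C_mul, Polynomial.coeff_map, Polynomial.coeff_map,
    coeff_qw hα (by omega), coeff_qw hα (by omega), pow_mul, map_pow, map_pow, ← mul_pow,
    map_mul, map_mul, laurentEval_T, laurentEval_T, laurentEval_toLaurent, laurentEval_toLaurent,
    ← aeval_qwCoeff_reflect (IsPrimitiveRoot.coe_units_iff.mpr h) hk hl hd]
  congr 1
  linear_combination -aeval (z : R) (qwCoeff (a * d + l) (i + 1)) * hexp

lemma map_qw_mul_qw_reflect (h : IsPrimitiveRoot z d) (hα : α ≠ 0) {k l : ℕ} (hk : 0 < k)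
    (hl : 0 < l) (hd : k + l + 2 = d) (a : ℕ) :
    Polynomial.C ((z : R) ^ (4 * (k + 1) * α)) *
        (qw α (a * d + l) * qw α (a * d + l + 1)).map (laurentEval z) =
      (qw α (a * d + k) * qw α (a * d + k + 1)).map (laurentEval z) := by
  rw [Polynomial.map_mul, Polynomial.map_mul, add_assoc, add_assoc,
    ← map_qw_reflect h hα hk l.succ_pos (by omega) a,
    ← map_qw_reflect h hα k.succ_pos hl (by omega) a,
    show 4 * (k + 1) * α = (2 * k + 1) * α + (2 * (k + 1) + 1) * α by ring, pow_add,
    Polynomial.C_mul]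
  ring

lemma laurentEval_summandWeight_reflect (h : IsPrimitiveRoot z d) (hd : 1 < d) (α m r : ℕ) (s : ℤ)
    {k l : ℕ} (hkl : d ∣ k + l + 2) :
    laurentEval z (summandWeight α m r s l) =
      -(z : R) ^ (4 * (k + 1) * α * m) * laurentEval z (summandWeight α m r s k) := by
  have h' : IsPrimitiveRoot (z : R) d := IsPrimitiveRoot.coe_units_iff.mpr h
  have hfirst : aeval (z : R) (qint (l * (l + 2))) = aeval (z : R) (qint (k * (k + 2))) := by
    have hmod : l * (l + 2) ≡ k * (k + 2) [MOD d] := by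
      rw [← Int.natCast_modEq_iff, Int.modEq_iff_dvd]
      refine ((Int.natCast_dvd_natCast.mpr hkl).mul_left (k - l : ℤ)).trans (dvd_of_eq ?_)
      push_cast
      ring
    rw [← aeval_qint_mod h' hd, hmod, aeval_qint_mod h' hd]
  have hsecond : (z : R) ^ (2 * (k + 1)) * aeval (z : R) (qint (2 * (l + 1))) =
      -aeval (z : R) (qint (2 * (k + 1))) :=
    pow_mul_aeval_qint_eq_neg h' hd ((hkl.mul_left 2).trans (dvd_of_eq (by ring)))
  have hexp : z ^ ((s - l) * (2 * α * m + 1)) =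
      z ^ (4 * (k + 1) * α * m) * z ^ (2 * (k + 1)) * z ^ ((s - k) * (2 * α * m + 1)) := by
    rw [← zpow_natCast, ← zpow_natCast, ← zpow_add, ← zpow_add]
    refine zpow_eq_zpow_of_modEq h (Int.modEq_iff_dvd.mpr ?_)
    refine ((Int.natCast_dvd_natCast.mpr hkl).mul_left (2 * α * m + 1 : ℤ)).trans (dvd_of_eq ?_)
    push_cast
    ring
  replace hexp := congrArg Units.val hexp
  simp only [Units.val_mul, Units.val_pow_eq_pow_val] at hexp
  simp only [summandWeight, qintL, map_mul, map_pow, laurentEval_T, laurentEval_toLaurent, hfirst,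
    hexp]
  linear_combination aeval (z : R) (qint (k * (k + 2))) ^ r * (z : R) ^ (4 * (k + 1) * α * m) *
    ((z ^ ((s - k) * (2 * α * m + 1)) : Rˣ) : R) * hsecond

lemma map_summand_eq_zero (h : IsPrimitiveRoot z d) (hd : 1 < d) (hr : r ≠ 0) (α m : ℕ) (s : ℤ)
    {k : ℕ} (hk : d ∣ k ∨ d ∣ k + 1 ∨ d ∣ k + 2) :
    (summand α m r s k).map (laurentEval z) = 0 := by
  have hqintL {n : ℕ} (hn : d ∣ n) : laurentEval z (qintL n) = 0 := by
    rw [qintL, laurentEval_toLaurent,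
      aeval_qint_eq_zero (IsPrimitiveRoot.coe_units_iff.mpr h) hd hn]
  have hweight : laurentEval z (summandWeight α m r s k) = 0 := by
    rw [summandWeight, map_mul, map_mul, map_pow]
    rcases hk with hk | hk | hk
    · simp [hqintL (hk.mul_right _), hr]
    · simp [hqintL (hk.mul_left 2)]
    · simp [hqintL (hk.mul_left k), hr]
  rw [summand, Polynomial.map_mul, Polynomial.map_C, hweight, Polynomial.C_0, zero_mul]

lemma map_summand_reflect (h : IsPrimitiveRoot z d) (hd : 1 < d) (hα : α ≠ 0) (hr : r ≠ 0)
    (m : ℕ) (s : ℤ) (a : ℕ) {k l : ℕ} (hkl : k + l + 2 = d) :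
    (summand α m r s (a * d + l)).map (laurentEval z) =
      -(summand α m r s (a * d + k)).map (laurentEval z) := by
  have hzero {b b' : ℕ} (hb : b = 0 ∨ b' = 0) (hbb' : b + b' + 2 = d) :
      (summand α m r s (a * d + b)).map (laurentEval z) = 0 := by
    refine map_summand_eq_zero h hd hr α m s ?_
    rcases hb with rfl | rfl
    · exact .inl ⟨a, by ring⟩
    · exact .inr (.inr ⟨a + 1, by rw [← hbb']; ring⟩)
  by_cases hpos : 0 < k ∧ 0 < l
  · have hq : (z : R) ^ d = 1 := by rw [← Units.val_pow_eq_pow_val, h.pow_eq_one, Units.val_one]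
    have hper : (z : R) ^ (4 * (a * d + k + 1) * α * m) = ((z : R) ^ (4 * (k + 1) * α)) ^ m := by
      rw [show 4 * (a * d + k + 1) * α * m = d * (4 * a * α * m) + 4 * (k + 1) * α * m by ring,
        pow_add, pow_mul _ d, hq, one_pow, one_mul, pow_mul]
    have hweight := laurentEval_summandWeight_reflect h hd α m r s
      (show d ∣ a * d + k + (a * d + l) + 2 from ⟨2 * a + 1, by rw [← hkl]; ring⟩)
    rw [summand, summand, Polynomial.map_mul, Polynomial.map_mul, Polynomial.map_pow,
      Polynomial.map_pow, ← map_qw_mul_qw_reflect h hα hpos.1 hpos.2 hkl a, Polynomial.map_C,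
      Polynomial.map_C, hweight, hper]
    simp only [Polynomial.C_mul, Polynomial.C_neg, Polynomial.C_pow]
    ring
  · rw [hzero (b := k) (b' := l), hzero (b := l) (b' := k), neg_zero] <;> omega

lemma sum_map_summand_eq_zero [CharZero R] (h : IsPrimitiveRoot z d) (hd : 1 < d) (hα : α ≠ 0)
    (hr : r ≠ 0) (m : ℕ) (s : ℤ) {n : ℕ} (hn : d ∣ n) :
    ∑ k ∈ Finset.range n, (summand α m r s k).map (laurentEval z) = 0 := by
  obtain ⟨N, rfl⟩ := hn
  rw [mul_comm, sum_range_mul]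
  refine Finset.sum_eq_zero fun a _ => ?_
  obtain ⟨d, rfl⟩ := Nat.exists_eq_add_one.mpr (Nat.zero_lt_of_lt hd)
  rw [Finset.sum_range_succ,
    map_summand_eq_zero h hd hr α m s (.inr (.inl ⟨a + 1, by ring⟩)), add_zero]
  exact sum_range_eq_zero_of_reflect fun k l hkl =>
    map_summand_reflect h hd hα hr m s a (by omega)

end Vanishing

/-- For all positive integers `α, m, n, r`,
`∑_{k=0}^{n-1} [k(k+2)]^r [2(k+1)] q^{(n-2-k)(2αm+1)} (w_k^{(α)}(x;q) w_{k+1}^{(α)}(x;q))^m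
≡ 0 (mod [n])`. -/
theorem qint_dvd_sum_prod (α m n r : ℕ) (hα : 1 ≤ α) (hm : 1 ≤ m) (hn : 1 ≤ n) (hr : 1 ≤ r) :
    (Polynomial.C (qintL n) : Polynomial (LaurentPolynomial ℤ)) ∣
      ∑ k ∈ Finset.range n,
        Polynomial.C ((qintL (k * (k + 2))) ^ r * qintL (2 * (k + 1)) *
            LaurentPolynomial.T (((n : ℤ) - 2 - k) * (2 * α * m + 1))) *
          (qw α k * qw α (k + 1)) ^ m := by
  change _ ∣ ∑ k ∈ Finset.range n, summand α m r ((n : ℤ) - 2) k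
  rw [Polynomial.C_dvd_iff_dvd_coeff]
  intro i
  refine qintL_dvd_of_forall_laurentEval_eq_zero hn fun d hd hdn z hz => ?_
  have hsum := sum_map_summand_eq_zero hz hd (Nat.one_le_iff_ne_zero.mp hα)
    (Nat.one_le_iff_ne_zero.mp hr) m ((n : ℤ) - 2) hdn
  rw [← Polynomial.coeff_map, Polynomial.map_sum, hsum, Polynomial.coeff_zero]
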